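/- arXiv:1910.12426 — 2 statements merged into one kernel-verified Lean document; each statement's English description precedes it below -/
import Mathlib

section
/- Let p be a prime and let ψ : ℚ_p → ℂ be an additive character trivial on ℤ_p. Let r ≥ 1, let n_1, …, n_r be nonnegative integers, and let x ∈ ℚ_p satisfy v_p(x) ≥ −(n_1 + ⋯ + n_r + min_i n_i). Suppose v_1, …, v_r and v_1′, …, v_r′ are elements of ℚ_p with v_p(v_i) = v_p(v_i′) = −n_i and v_i − v_i′ ∈ ℤ_p for each i. Then ψ(v_1 + ⋯ + v_r) · ψ(x · v_1⁻¹ ⋯ v_r⁻¹) = ψ(v_1′ + ⋯ + v_r′) · ψ(x · (v_1′)⁻¹ ⋯ (v_r′)⁻¹). In particular, the summand of the local hyper-Kloosterman sum depends only on the cosets v_i + ℤ_p, so the local hyper-Kloosterman sum ∑_{v_i ∈ p^{−n_i}ℤ_pˣ/ℤ_p} ψ(v_1 + ⋯ + v_r) ψ(x v_1⁻¹⋯v_r⁻¹) is well defined. -/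
/-!
Since `ψ` is trivial on `ℤ_p`, it suffices that each of the two arguments of `ψ` changes by an
element of `ℤ_p` only. For the sums this is the ultrametric inequality. For the inverse products,
put `uᵢ = v'ᵢ / vᵢ` and `m = minᵢ nᵢ`. Each `uᵢ` is a unit with `‖uᵢ - 1‖ ≤ p^(-nᵢ) ≤ p^(-m)`, and
units congruent to `1` modulo `p^m` are closed under products, so `‖∏ uᵢ - 1‖ ≤ p^(-m)`. Hence
`x ∏ vᵢ⁻¹ - x ∏ v'ᵢ⁻¹ = x ∏ v'ᵢ⁻¹ (∏ uᵢ - 1)` has norm at most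
`p^(∑ nᵢ + m) · p^(-∑ nᵢ) · p^(-m) = 1`.
-/

lemma eq_of_norm_sub_le_one {p : ℕ} [Fact p.Prime] {ψ : ℚ_[p] → ℂ}
    (hadd : ∀ x y : ℚ_[p], ψ (x + y) = ψ x * ψ y)
    (htriv : ∀ z : ℚ_[p], ‖z‖ ≤ 1 → ψ z = 1) {a b : ℚ_[p]} (h : ‖a - b‖ ≤ 1) : ψ a = ψ b := by
  rw [← add_sub_cancel b a, hadd, htriv _ h, mul_one]

/-- Integral elements within distance `c` of `1` have products within distance `c` of `1`, because
`u P - 1 = u (P - 1) + (u - 1)`. -/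
lemma norm_prod_sub_one_le {p : ℕ} [Fact p.Prime] {ι : Type*} (s : Finset ι) (u : ι → ℚ_[p])
    {c : ℝ} (hc : 0 ≤ c) (hu : ∀ i, ‖u i‖ ≤ 1) (hu1 : ∀ i, ‖u i - 1‖ ≤ c) :
    ‖∏ i ∈ s, u i - 1‖ ≤ c := by
  induction s using Finset.cons_induction with
  | empty => simpa using hc
  | cons a s ha ih =>
    rw [Finset.prod_cons, show u a * ∏ i ∈ s, u i - 1 = u a * (∏ i ∈ s, u i - 1) + (u a - 1) by ring]
    refine (IsUltrametricDist.norm_add_le_max _ _).trans (max_le ?_ (hu1 a))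
    rw [norm_mul]
    exact (mul_le_of_le_one_left (norm_nonneg _) (hu a)).trans ih


/-- The summand of the local hyper-Kloosterman sum depends only on the cosets `vᵢ + ℤ_p`.
Let `ψ : ℚ_p → ℂ` be an additive character trivial on `ℤ_p`, let `r ≥ 1`, `n_1, …, n_r ≥ 0`,
and let `x ∈ ℚ_p` satisfy `v_p(x) ≥ -(n_1 + ⋯ + n_r + min_i n_i)` (expressed via the norm).
If `v_i, v_i'` have valuation exactly `-n_i` (i.e. `‖v_i‖ = p^{n_i}`) and `v_i - v_i' ∈ ℤ_p`,
then `ψ(v_1 + ⋯ + v_r)·ψ(x·v_1⁻¹⋯v_r⁻¹) = ψ(v_1' + ⋯ + v_r')·ψ(x·(v_1')⁻¹⋯(v_r')⁻¹)`. -/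
theorem local_hyperKloosterman_summand_well_defined (p : ℕ) [Fact p.Prime] (ψ : ℚ_[p] → ℂ)
    (hadd : ∀ x y : ℚ_[p], ψ (x + y) = ψ x * ψ y)
    (htriv : ∀ z : ℚ_[p], ‖z‖ ≤ 1 → ψ z = 1)
    (r : ℕ) (hr : 1 ≤ r) (n : Fin r → ℕ) (x : ℚ_[p])
    (hx : ‖x‖ ≤ (p : ℝ) ^ ((((∑ i, n i) + sInf (Set.range n) : ℕ)) : ℤ))
    (v v' : Fin r → ℚ_[p])
    (hv : ∀ i, ‖v i‖ = (p : ℝ) ^ ((n i : ℤ)))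
    (hv' : ∀ i, ‖v' i‖ = (p : ℝ) ^ ((n i : ℤ)))
    (hcoset : ∀ i, ‖v i - v' i‖ ≤ 1) :
    ψ (∑ i, v i) * ψ (x * ∏ i, (v i)⁻¹) =
      ψ (∑ i, v' i) * ψ (x * ∏ i, (v' i)⁻¹) := by
  have hp : (0 : ℝ) < p := by exact_mod_cast (Fact.out : p.Prime).pos
  have hp1 : (1 : ℝ) ≤ p := by exact_mod_cast (Fact.out : p.Prime).one_le
  have hv0 : ∀ i, v i ≠ 0 := fun i => norm_pos_iff.mp (by rw [hv i]; positivity)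
  have hv0' : ∀ i, v' i ≠ 0 := fun i => norm_pos_iff.mp (by rw [hv' i]; positivity)
  set m := sInf (Set.range n) with hm
  have hmn : ∀ i, m ≤ n i := fun i => Nat.sInf_le ⟨i, rfl⟩
  have hsum : ‖∑ i, v i - ∑ i, v' i‖ ≤ 1 := by
    rw [← Finset.sum_sub_distrib]
    exact IsUltrametricDist.norm_sum_le_of_forall_le_of_nonneg zero_le_one fun i _ => hcoset i
  have hratio : ‖∏ i, v' i / v i - 1‖ ≤ ((p : ℝ) ^ m)⁻¹ := by
    refine norm_prod_sub_one_le _ _ (by positivity) (fun i => ?_) fun i => ?_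
    · rw [norm_div, hv, hv']
      exact div_self_le_one _
    · rw [div_sub_one (hv0 i), norm_div, norm_sub_rev, hv, zpow_natCast, div_eq_mul_inv]
      refine (mul_le_of_le_one_left (by positivity) (hcoset i)).trans ?_
      gcongr
      exact hmn i
  have hprod : ‖x * ∏ i, (v i)⁻¹ - x * ∏ i, (v' i)⁻¹‖ ≤ 1 := by
    have hfac : x * ∏ i, (v i)⁻¹ - x * ∏ i, (v' i)⁻¹
        = x * (∏ i, (v' i)⁻¹) * (∏ i, v' i / v i - 1) := by
      have : ∏ i, (v i)⁻¹ = (∏ i, (v' i)⁻¹) * ∏ i, v' i / v i := by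
        rw [← Finset.prod_mul_distrib]
        refine Finset.prod_congr rfl fun i _ => ?_
        have := hv0 i
        have := hv0' i
        field_simp
      rw [this]
      ring
    have hinv : ‖∏ i, (v' i)⁻¹‖ = ((p : ℝ) ^ (∑ i, n i))⁻¹ := by
      simp [norm_prod, hv', Finset.prod_pow_eq_pow_sum]
    rw [zpow_natCast] at hx
    rw [hfac, norm_mul, norm_mul, hinv]
    calc ‖x‖ * ((p : ℝ) ^ (∑ i, n i))⁻¹ * ‖∏ i, v' i / v i - 1‖
        ≤ (p : ℝ) ^ (∑ i, n i + m) * ((p : ℝ) ^ (∑ i, n i))⁻¹ * ((p : ℝ) ^ m)⁻¹ := by gcongr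
      _ = 1 := by rw [pow_add]; field_simp
  rw [eq_of_norm_sub_le_one hadd htriv hsum, eq_of_norm_sub_le_one hadd htriv hprod]
end

section
/- Let p be a prime and let ψ : ℚ_p → ℂ be an additive character trivial on ℤ_p and nontrivial on p⁻¹ℤ_p. Let n ≥ 1, N ≥ 2, and let x ∈ ℚ_p satisfy v_p(x) ≥ −(N−1)n. Let b ∈ ZMod pⁿ be the reduction modulo pⁿ of the p-adic integer x·p^{(N−1)n}, and let χ : ZMod pⁿ → ℂ be the primitive additive character χ(a) = ψ(ã·p⁻ⁿ). Then the local hyper-Kloosterman sum with all torus coordinates equal to p⁻ⁿ equals a classical hyper-Kloosterman sum modulo pⁿ: ∑_{(a_2, …, a_{N−1}) ∈ ((ZMod pⁿ)ˣ)^{N−2}} ψ(ã_2 p⁻ⁿ + ⋯ + ã_{N−1} p⁻ⁿ) · ψ(x · (ã_2 p⁻ⁿ)⁻¹ ⋯ (ã_{N−1} p⁻ⁿ)⁻¹) = Kl_{N−1}(b; χ), where ã_i denotes any integer lift of a_i (the left-hand side being independent of the lifts), and Kl_{N−1}(b; χ) := ∑_{(a_2,…,a_{N−1}) ∈ ((ZMod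 pⁿ)ˣ)^{N−2}} χ(a_2 + ⋯ + a_{N−1} + b·(a_2⋯a_{N−1})⁻¹). -/
/-!
Since `ψ` is additive and trivial on `ℤ_p`, the value `ψ (u p⁻ⁿ)` for `u ∈ ℤ_p` depends only on
`u` modulo `pⁿ` (`psi_eq_of_toZModPow_eq`). Any integer lift of a unit modulo `pⁿ` is a unit of
`ℤ_p` (`isUnit_intCast_of_lift`), so each summand on the left is a value `ψ (u p⁻ⁿ)` with
`u = ∑ ãᵢ + y (∏ ãᵢ)⁻¹ ∈ ℤ_p`: the factor `p ^ ((N - 2) n)` coming from the inverted torus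
coordinates turns `x` into `y p⁻ⁿ`. The reduction of `u` modulo `pⁿ` is the argument of `χ` in the
matching summand of the classical sum, so the two sums agree term by term.
-/

/-- The hyper-Kloosterman sum `Kl_m(a; χ)` of dimension `m - 1` modulo `c`:
`Kl_m(a; χ) = ∑_{x_1, …, x_{m-1} ∈ (ZMod c)ˣ} χ(x_1 + ⋯ + x_{m-1} + a·(x_1⋯x_{m-1})⁻¹)`. -/
noncomputable def hyperKloosterman (c : ℕ) [NeZero c] (χ : ZMod c → ℂ) (m : ℕ) (a : ZMod c) : ℂ :=
  ∑ x : Fin (m - 1) → (ZMod c)ˣ,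
    χ ((∑ i, (x i : ZMod c)) + a * (((∏ i, x i)⁻¹ : (ZMod c)ˣ) : ZMod c))

theorem psi_eq_of_toZModPow_eq (p : ℕ) [Fact p.Prime] (ψ : ℚ_[p] → ℂ)
    (hadd : ∀ x y : ℚ_[p], ψ (x + y) = ψ x * ψ y)
    (htriv : ∀ z : ℚ_[p], ‖z‖ ≤ 1 → ψ z = 1) (n : ℕ) (u v : ℤ_[p])
    (h : PadicInt.toZModPow n u = PadicInt.toZModPow n v) :
    ψ ((u : ℚ_[p]) * (p : ℚ_[p]) ^ (-(n : ℤ))) = ψ ((v : ℚ_[p]) * (p : ℚ_[p]) ^ (-(n : ℤ))) := by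
  have hp : (p : ℚ_[p]) ≠ 0 := Nat.cast_ne_zero.mpr (Fact.out : p.Prime).ne_zero
  have hk : u - v ∈ RingHom.ker (PadicInt.toZModPow (p := p) n) := by
    rw [RingHom.mem_ker, map_sub, h, sub_self]
  rw [PadicInt.ker_toZModPow, Ideal.mem_span_singleton] at hk
  obtain ⟨t, ht⟩ := hk
  obtain rfl : u = v + (p : ℤ_[p]) ^ n * t := by rw [← ht]; ring
  have e : (((v + (p : ℤ_[p]) ^ n * t : ℤ_[p])) : ℚ_[p]) * (p : ℚ_[p]) ^ (-(n : ℤ)) =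
      (v : ℚ_[p]) * (p : ℚ_[p]) ^ (-(n : ℤ)) + (t : ℚ_[p]) := by
    push_cast
    rw [zpow_neg, zpow_natCast]
    field_simp
  rw [e, hadd, htriv t t.norm_le_one, mul_one]

theorem isUnit_intCast_of_lift (p : ℕ) [Fact p.Prime] (n : ℕ) (hn : 1 ≤ n)
    (a : (ZMod (p ^ n))ˣ) (l : ℤ) (h : (l : ZMod (p ^ n)) = (a : ZMod (p ^ n))) :
    IsUnit (l : ℤ_[p]) := by
  have hc : IsCoprime l ((p ^ n : ℕ) : ℤ) := by
    rw [isCoprime_comm, ← ZMod.coe_int_isUnit_iff_isCoprime, h]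
    exact a.isUnit
  rw [Nat.cast_pow, IsCoprime.pow_right_iff (by omega)] at hc
  by_contra hu
  rw [PadicInt.isUnit_iff] at hu
  have hlt := lt_of_le_of_ne (PadicInt.norm_le_one (l : ℤ_[p])) hu
  rw [PadicInt.norm_int_lt_one_iff_dvd] at hlt
  exact (Nat.prime_iff_prime_int.mp (Fact.out : p.Prime)).not_isUnit
    (hc.isUnit_of_dvd' hlt dvd_rfl)

/-- The local hyper-Kloosterman sum (all torus coordinates equal to `p⁻ⁿ`) equals a classical
hyper-Kloosterman sum modulo `pⁿ`. Here `ψ : ℚ_p → ℂ` is an additive character trivial on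
`ℤ_p` and nontrivial on `p⁻¹ℤ_p`, `n ≥ 1`, `N ≥ 2`, `v_p(x) ≥ -(N-1)n`,
`y ∈ ℤ_p` equals `x·p^{(N-1)n}`, `b ∈ ZMod pⁿ` is the reduction of `y`, the `ãᵢ = lift aᵢ` are
arbitrary integer lifts, and `χ(a) = ψ(ã·p⁻ⁿ)` is the associated primitive character. -/
theorem local_hyperKloosterman_eq_classical (p : ℕ) [Fact p.Prime] (ψ : ℚ_[p] → ℂ)
    (hadd : ∀ x y : ℚ_[p], ψ (x + y) = ψ x * ψ y)
    (htriv : ∀ z : ℚ_[p], ‖z‖ ≤ 1 → ψ z = 1)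
    (hnontriv : ∃ z : ℚ_[p], ‖z * (p : ℚ_[p])‖ ≤ 1 ∧ ψ z ≠ 1)
    (n : ℕ) (hn : 1 ≤ n) (N : ℕ) (hN : 2 ≤ N)
    (x : ℚ_[p]) (hx : ‖x‖ ≤ (p : ℝ) ^ ((((N - 1) * n : ℕ)) : ℤ))
    (y : ℤ_[p]) (hy : (y : ℚ_[p]) = x * (p : ℚ_[p]) ^ ((N - 1) * n))
    (lift : (ZMod (p ^ n))ˣ → ℤ)
    (hlift : ∀ a : (ZMod (p ^ n))ˣ, ((lift a : ℤ) : ZMod (p ^ n)) = (a : ZMod (p ^ n))) :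
    ∑ a : Fin (N - 2) → (ZMod (p ^ n))ˣ,
        ψ (∑ i, (lift (a i) : ℚ_[p]) * (p : ℚ_[p]) ^ (-(n : ℤ))) *
          ψ (x * ∏ i, ((lift (a i) : ℚ_[p]) * (p : ℚ_[p]) ^ (-(n : ℤ)))⁻¹) =
      hyperKloosterman (p ^ n)
        (fun a => ψ ((a.val : ℚ_[p]) * (p : ℚ_[p]) ^ (-(n : ℤ))))
        (N - 1) (PadicInt.toZModPow n y) := by
  have hp : (p : ℚ_[p]) ≠ 0 := Nat.cast_ne_zero.mpr (Fact.out : p.Prime).ne_zero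
  obtain ⟨k, rfl⟩ : ∃ k, N = k + 2 := ⟨N - 2, by omega⟩
  unfold hyperKloosterman
  change ∑ a : Fin k → (ZMod (p ^ n))ˣ, _ = ∑ a : Fin k → (ZMod (p ^ n))ˣ, _
  refine Finset.sum_congr rfl fun a _ => ?_
  choose U hU using fun b => isUnit_intCast_of_lift p n hn b (lift b) (hlift b)
  set w : ℤ_[p] := (∑ i, (lift (a i) : ℤ_[p])) + y * ((∏ i, U (a i))⁻¹ : ℤ_[p]ˣ) with hw
  have hmap : ∀ b, Units.map (PadicInt.toZModPow (p := p) n).toMonoidHom (U b) = b := by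
    intro b
    ext
    simp [hU, hlift]
  have hwred : PadicInt.toZModPow n w = (∑ i, (a i : ZMod (p ^ n))) +
      PadicInt.toZModPow n y * (((∏ i, a i)⁻¹ : (ZMod (p ^ n))ˣ) : ZMod (p ^ n)) := by
    have hinv : PadicInt.toZModPow n (((∏ i, U (a i))⁻¹ : ℤ_[p]ˣ) : ℤ_[p]) =
        (((∏ i, a i)⁻¹ : (ZMod (p ^ n))ˣ) : ZMod (p ^ n)) := by
      change ((Units.map (PadicInt.toZModPow (p := p) n).toMonoidHom (∏ i, U (a i))⁻¹ :
        (ZMod (p ^ n))ˣ) : ZMod (p ^ n)) = _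
      rw [map_inv, map_prod]
      simp only [hmap]
    rw [hw, map_add, map_mul, map_sum, hinv]
    simp only [map_intCast, hlift]
  have hUinv : ((((∏ i, U (a i))⁻¹ : ℤ_[p]ˣ) : ℤ_[p]) : ℚ_[p]) =
      (∏ i, (lift (a i) : ℚ_[p]))⁻¹ := by
    refine eq_inv_of_mul_eq_one_left ?_
    have h1 : (((∏ i, U (a i))⁻¹ : ℤ_[p]ˣ) : ℤ_[p]) * ∏ i, (lift (a i) : ℤ_[p]) = 1 := by
      simp only [← hU, ← Units.coe_prod]
      exact Units.inv_mul _
    have h2 := congrArg (PadicInt.Coe.ringHom (p := p)) h1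
    rw [map_mul, map_prod, map_one] at h2
    simp only [map_intCast] at h2
    exact h2
  have hwcoe : (w : ℚ_[p]) * (p : ℚ_[p]) ^ (-(n : ℤ)) =
      (∑ i, (lift (a i) : ℚ_[p]) * (p : ℚ_[p]) ^ (-(n : ℤ))) +
        x * ∏ i, ((lift (a i) : ℚ_[p]) * (p : ℚ_[p]) ^ (-(n : ℤ)))⁻¹ := by
    have hsum : ((∑ i, (lift (a i) : ℤ_[p]) : ℤ_[p]) : ℚ_[p]) = ∑ i, (lift (a i) : ℚ_[p]) := by
      simp
    rw [hw, PadicInt.coe_add, PadicInt.coe_mul, hUinv, hsum, hy, add_mul, Finset.sum_mul,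
      Finset.prod_inv_distrib, Finset.prod_mul_distrib, Finset.prod_const, Finset.card_univ,
      Fintype.card_fin, mul_inv, show k + 2 - 1 = k + 1 from rfl, add_mul k 1 n, one_mul, pow_add,
      zpow_neg, zpow_natCast, inv_pow, inv_inv, ← pow_mul, mul_comm n k]
    field_simp
  refine (hadd _ _).symm.trans ((congrArg ψ hwcoe).symm.trans ?_)
  refine Eq.trans ?_
    (congrArg (fun c : ZMod (p ^ n) => ψ ((c.val : ℚ_[p]) * (p : ℚ_[p]) ^ (-(n : ℤ)))) hwred)
  -- The canonical representative `ZMod.val` in the definition of `χ` is a lift of `w` modulo `pⁿ`.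
  rw [← PadicInt.coe_natCast (PadicInt.toZModPow n w).val]
  apply psi_eq_of_toZModPow_eq p ψ hadd htriv
  rw [map_natCast, ZMod.natCast_zmod_val]
end
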